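/- arXiv:2306.03782 — 2 statements merged into one kernel-verified Lean document; each statement's English description precedes it below -/
import Mathlib

section
/- Let (Ω, 𝒫) be a probability space and x : ℤ → Ω → ℝ a measurable process. Let G, G_m, H, H_m (m ∈ ℕ) be Borel-measurable functions (ℕ → ℝ) → ℝ (where ℕ → ℝ carries the product topology and its Borel σ-algebra), with H continuous for the product topology, such that G_m → G and H_m → H uniformly on ℕ → ℝ as m → ∞. Define ν_t(ω) = G(fun k : ℕ => x_{t−k}(ω)), ν_{t,m}(ω) = G_m(fun k : ℕ => x_{t−k}(ω)), and the approximate reconstructions x̂_{t,m}(ω) = H_m(fun k : ℕ => ν_{t−k,m}(ω)). Assume the limit reconstruction x̂_t(ω) = H(fun k : ℕ => ν_{t−k}(ω)) satisfies that the law of (x̂_t)_{t∈ℤ} on ℤ → ℝ equals the law of (x_t)_{t∈ℤ}. Then for every block length n ≥ 1 and every t ∈ ℤ, the law of the random vector (x̂_{t,m}, x̂_{t−1,m}, …, x̂_{t−n+1,m}) in ℝⁿ converges weakly (i.e., in distribution), as m → ∞, to the law of (x_t, x_{t−1}, …, x_{t−n+1}). -/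
open MeasureTheory ProbabilityTheory Filter

/-!
Uniform convergence of `Gm` gives pointwise, hence product-topology, convergence of the latent
sequences. Uniform convergence of `Hm` to a *continuous* `H` then lets the limit pass through the
moving argument, so the approximate reconstructions converge at every `ω` to the limit
reconstruction (`TendstoUniformly.tendsto_comp`). Dominated convergence, with the bound `‖f‖`,
turns this into convergence in distribution of blocks, and the equality of process laws, pushed
forward along the coordinates `t, …, t - n + 1`, identifies the limit.
-/

/-- **Decoder convergence.** If the finite-dimensional encoders `G_m` and decoders `H_m`
converge uniformly to a true weak-innovations pair `(G, H)` with `H` continuous, and the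
limit reconstruction `x̂_t(ω) = H (fun k => ν (t−k) ω)` (with `ν_t(ω) = G (fun k => x (t−k) ω)`)
has the same law on `ℤ → ℝ` as the original process `x`, then for every block length `n ≥ 1`
and every time `t`, the laws of the blocks `(x̂_{t,m}, …, x̂_{t−n+1,m})` of approximate
reconstructions converge weakly (tested against all bounded continuous functions) to the law
of the block `(x_t, …, x_{t−n+1})` of the original process. -/
theorem decoder_blocks_tendsto_in_distribution
    {Ω : Type*} [MeasurableSpace Ω] (P : Measure Ω) [IsProbabilityMeasure P]
    (x : ℤ → Ω → ℝ) (hx : ∀ t, Measurable (x t))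
    (G H : (ℕ → ℝ) → ℝ) (Gm Hm : ℕ → (ℕ → ℝ) → ℝ)
    (hG : Measurable G) (hH : Measurable H) (hHcont : Continuous H)
    (hGm : ∀ m, Measurable (Gm m)) (hHm : ∀ m, Measurable (Hm m))
    (hGunif : TendstoUniformly Gm G atTop) (hHunif : TendstoUniformly Hm H atTop)
    (hlaw : P.map (fun ω => fun s : ℤ =>
              H (fun k : ℕ => G (fun j : ℕ => x (s - k - j) ω)))
          = P.map (fun ω => fun s : ℤ => x s ω))
    (n : ℕ) (hn : 1 ≤ n) (t : ℤ) :
    ∀ f : BoundedContinuousFunction (Fin n → ℝ) ℝ,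
      Tendsto
        (fun m => ∫ v, f v ∂(P.map (fun ω => fun i : Fin n =>
          Hm m (fun k : ℕ => Gm m (fun j : ℕ => x (t - i - k - j) ω)))))
        atTop
        (nhds (∫ v, f v ∂(P.map (fun ω => fun i : Fin n => x (t - i) ω)))) := by
  intro f
  have hmeas : ∀ A B : (ℕ → ℝ) → ℝ, Measurable A → Measurable B → ∀ s : ℤ,
      Measurable (fun ω => B (fun k : ℕ => A (fun j : ℕ => x (s - k - j) ω))) :=
    fun A B hA hB s => hB.comp (measurable_pi_lambda _ fun k =>
      hA.comp (measurable_pi_lambda _ fun j => hx _))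
  have hblock : P.map (fun ω => fun i : Fin n => x (t - i) ω)
      = P.map (fun ω => fun i : Fin n =>
          H (fun k : ℕ => G (fun j : ℕ => x (t - i - k - j) ω))) := by
    have hproj : Measurable (fun (v : ℤ → ℝ) (i : Fin n) => v (t - i)) :=
      measurable_pi_lambda _ fun i => measurable_pi_apply _
    have h := congrArg (Measure.map (fun (v : ℤ → ℝ) (i : Fin n) => v (t - i))) hlaw
    rw [Measure.map_map hproj (measurable_pi_lambda _ fun s => hmeas G H hG hH s),
      Measure.map_map hproj (measurable_pi_lambda _ hx)] at h
    exact h.symm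
  have hint : ∀ X : Ω → Fin n → ℝ, Measurable X →
      ∫ v, f v ∂(P.map X) = ∫ ω, f (X ω) ∂P := fun X hX =>
    integral_map hX.aemeasurable f.continuous.aestronglyMeasurable
  have hmeasm : ∀ m, Measurable (fun ω => fun i : Fin n =>
      Hm m (fun k : ℕ => Gm m (fun j : ℕ => x (t - i - k - j) ω))) := fun m =>
    measurable_pi_lambda _ fun i => hmeas _ _ (hGm m) (hHm m) _
  rw [hblock, hint _ (measurable_pi_lambda _ fun i => hmeas G H hG hH _)]
  simp_rw [fun m => hint _ (hmeasm m)]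
  refine tendsto_integral_of_dominated_convergence (fun _ => ‖f‖)
    (fun m => (f.continuous.measurable.comp (hmeasm m)).aestronglyMeasurable)
    (integrable_const _) (fun m => ae_of_all _ fun ω => f.norm_coe_le_norm _)
    (ae_of_all _ fun ω => ?_)
  refine (f.continuous.tendsto _).comp (tendsto_pi_nhds.2 fun i => ?_)
  exact hHunif.tendsto_comp hHcont.continuousAt
    (tendsto_pi_nhds.2 fun k => hGunif.tendsto_at _)
end

section
/- Let (Ω, 𝒫) be a probability space, γ and δ measurable spaces, β a nonempty standard Borel space, U : Ω → γ and V : Ω → δ independent measurable random variables, and f : γ × δ → β a measurable function. Then for (𝒫 ∘ V⁻¹)-almost every v ∈ δ, the regular conditional distribution of ω ↦ f(U(ω), V(ω)) given V, evaluated at v, equals the pushforward of the law of U under the map u ↦ f(u, v): condDistrib (f ∘ (U, V)) V 𝒫 (v) = (fun u => f(u, v))_*(𝒫 ∘ U⁻¹). -/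
/-! By uniqueness of the disintegration, a finite kernel `κ` agrees almost everywhere with the
conditional distribution of `f (U, V)` given `V` as soon as the joint law of `(V, f (U, V))` is
`(P.map V) ⊗ₘ κ`. For the kernel that freezes `v` and pushes forward the law of `U`, this identity
is Tonelli's theorem, because independence makes the joint law of `(V, U)` the product of the
marginals. -/

open MeasureTheory ProbabilityTheory

/-- The kernel `v ↦ (law of u ↦ f (u, v) under μ)`, obtained by freezing the second argument of `f`
and pushing forward the fixed measure `μ` on the first one. -/
noncomputable def frozenKernel {γ δ β : Type*} [MeasurableSpace γ] [MeasurableSpace δ]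
    [MeasurableSpace β] (μ : Measure γ) [IsProbabilityMeasure μ] (f : γ × δ → β)
    (hf : Measurable f) : Kernel δ β where
  toFun v := μ.map (fun u => f (u, v))
  measurable' := by
    refine Measure.measurable_of_measurable_coe _ fun s hs => ?_
    have h (v : δ) : μ.map (fun u => f (u, v)) s = μ ((fun u => (u, v)) ⁻¹' (f ⁻¹' s)) :=
      Measure.map_apply (by fun_prop) hs
    simp_rw [h]
    exact measurable_measure_prodMk_right (hf hs)

instance {γ δ β : Type*} [MeasurableSpace γ] [MeasurableSpace δ]
    [MeasurableSpace β] (μ : Measure γ) [IsProbabilityMeasure μ] (f : γ × δ → β)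
    (hf : Measurable f) : IsMarkovKernel (frozenKernel μ f hf) where
  isProbabilityMeasure v :=
    Measure.isProbabilityMeasure_map (f := fun u => f (u, v)) (by fun_prop)

/-- If `U` and `V` are independent random variables and `f` is measurable, then the regular
conditional distribution of `ω ↦ f (U ω, V ω)` given `V`, evaluated at `v`, is the
pushforward of the law of `U` under `u ↦ f (u, v)`, for `(P ∘ V⁻¹)`-almost every `v`. -/
theorem condDistrib_comp_of_indepFun
    {Ω γ δ β : Type*} [MeasurableSpace Ω] [MeasurableSpace γ] [MeasurableSpace δ]
    [MeasurableSpace β] [StandardBorelSpace β] [Nonempty β]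
    (P : Measure Ω) [IsProbabilityMeasure P]
    (U : Ω → γ) (V : Ω → δ) (hU : Measurable U) (hV : Measurable V)
    (hindep : IndepFun U V P)
    (f : γ × δ → β) (hf : Measurable f) :
    ∀ᵐ v ∂(P.map V),
      condDistrib (fun ω => f (U ω, V ω)) V P v = (P.map U).map (fun u => f (u, v)) := by
  have : IsProbabilityMeasure (P.map U) := Measure.isProbabilityMeasure_map hU.aemeasurable
  have : IsProbabilityMeasure (P.map V) := Measure.isProbabilityMeasure_map hV.aemeasurable
  refine condDistrib_ae_eq_of_measure_eq_compProd V (κ := frozenKernel (P.map U) f hf)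
    (by fun_prop) ?_
  have hprod : P.map (fun ω => (V ω, U ω)) = (P.map V).prod (P.map U) :=
    (indepFun_iff_map_prod_eq_prod_map_map hV.aemeasurable hU.aemeasurable).1 hindep.symm
  have hg : Measurable (fun p : δ × γ => (p.1, f (p.2, p.1))) := by fun_prop
  have hjoint : P.map (fun ω => (V ω, f (U ω, V ω)))
      = ((P.map V).prod (P.map U)).map (fun p : δ × γ => (p.1, f (p.2, p.1))) := by
    rw [← hprod, Measure.map_map hg (hV.prodMk hU)]
    rfl
  ext s hs
  rw [hjoint, Measure.map_apply hg hs, Measure.prod_apply (hg hs), Measure.compProd_apply hs]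
  refine lintegral_congr fun v => ?_
  exact (Measure.map_apply (f := fun u => f (u, v)) (by fun_prop)
    (measurable_prodMk_left hs)).symm
end
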